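/- The determinant of the matrix A_Q := ∑_{g∈S_n} M_q(g) factors as det A_Q = ∏_{m=2}^{n} ∏_{T} (1 − σ_T)^{(m−2)!·(n−m+1)!}, where the inner product runs over all subsets T ⊆ Fin n of cardinality m. -/

import Mathlib

/-- The square complex matrices indexed by the symmetric group `Equiv.Perm (Fin n)`. -/
abbrev PermMatrix (n : ℕ) := Matrix (Equiv.Perm (Fin n)) (Equiv.Perm (Fin n)) ℂ

/-- The set of inversions `I(g) = {(a,b) : a < b and g(a) > g(b)}` of a permutation. -/
def invSet {n : ℕ} (g : Equiv.Perm (Fin n)) : Finset (Fin n × Fin n) :=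
  Finset.univ.filter fun p => p.1 < p.2 ∧ g p.2 < g p.1

/-- The matrix `M_q(g)`, with `(σ,τ)`-entry `∏_{(a,b) ∈ I(g)} q (τ b) (τ a)`
if `σ = τ ∘ g⁻¹` and `0` otherwise. -/
def twistMat (n : ℕ) (q : Fin n → Fin n → ℂ) (g : Equiv.Perm (Fin n)) : PermMatrix n :=
  fun σ τ => if σ = τ * g⁻¹ then ∏ p ∈ invSet g, q (τ p.2) (τ p.1) else 0

/-- `IsTCycle a b s` says that `s` is the cycle `t_{b,a}` (for `a ≤ b`):
`s i = i + 1` for `a ≤ i ≤ b - 1`, `s b = a`, and `s i = i` otherwise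
(in particular `t_{b,b} = id`). -/
def IsTCycle {n : ℕ} (a b : Fin n) (s : Equiv.Perm (Fin n)) : Prop :=
  (∀ i : Fin n, a ≤ i → i < b → (s i : ℕ) = (i : ℕ) + 1) ∧ s b = a ∧
    ∀ i : Fin n, ¬(a ≤ i ∧ i ≤ b) → s i = i

/-- `σ_T = ∏_{i,j ∈ T, i ≠ j} q i j`, the product over all ordered pairs of distinct
elements of `T`. -/
def sigmaT {n : ℕ} (q : Fin n → Fin n → ℂ) (T : Finset (Fin n)) : ℂ :=
  ∏ p ∈ (T ×ˢ T).filter fun p => p.1 ≠ p.2, q p.1 p.2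


open Equiv Finset

/-- weighted permutation matrices -/
def wMat {R : Type*} [CommRing R] {n : ℕ} (f : Perm (Fin n) → R) (g : Perm (Fin n)) :
    Matrix (Perm (Fin n)) (Perm (Fin n)) R :=
  fun σ τ => if σ = τ * g⁻¹ then f τ else 0

/-- the twisting weight -/
def fw {R : Type*} [CommRing R] {n : ℕ} (q : Fin n → Fin n → R) (g τ : Perm (Fin n)) : R :=
  ∏ p ∈ invSet g, q (τ p.2) (τ p.1)

/-- σ_T over a general ring -/
def sgT {R : Type*} [CommRing R] {n : ℕ} (q : Fin n → Fin n → R) (T : Finset (Fin n)) : R :=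
  ∏ p ∈ (T ×ˢ T).filter fun p => p.1 ≠ p.2, q p.1 p.2

/-- the cycle moving position `p` to position `k` -/
def tc {n : ℕ} (p k : Fin n) : Perm (Fin n) where
  toFun x := if p ≤ x ∧ x ≤ k then (if x = p then k else ⟨x - 1, by omega⟩) else x
  invFun x := if h : p ≤ x ∧ x ≤ k then (if h' : x = k then p else ⟨x + 1, by
    have := k.2
    have := h.2
    simp only [Fin.ext_iff, Fin.le_def] at *
    omega⟩) else x
  left_inv := by
    intro x
    simp only [Fin.ext_iff, Fin.le_def]
    split_ifs <;> simp_all <;> omega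
  right_inv := by
    intro x
    simp only [Fin.ext_iff, Fin.le_def]
    split_ifs <;> simp_all <;> omega

lemma tc_val {n : ℕ} (p k x : Fin n) : ((tc p k x : Fin n) : ℕ) =
    if (p : ℕ) ≤ x ∧ (x : ℕ) ≤ k then (if (x : ℕ) = p then (k : ℕ) else x - 1) else x := by
  simp only [tc, Equiv.coe_fn_mk, Fin.ext_iff, Fin.le_def]
  split_ifs <;> rfl

lemma tc_inv_val {n : ℕ} (p k x : Fin n) : (((tc p k)⁻¹ x : Fin n) : ℕ) =
    if (p : ℕ) ≤ x ∧ (x : ℕ) ≤ k then (if (x : ℕ) = k then (p : ℕ) else x + 1) else x := by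
  change (((tc p k).symm x : Fin n) : ℕ) = _
  simp only [tc, Equiv.coe_fn_symm_mk, Fin.ext_iff, Fin.le_def]
  split_ifs <;> rfl

lemma wMat_mul {R : Type*} [CommRing R] {n : ℕ} (f f' : Perm (Fin n) → R) (g g' : Perm (Fin n)) :
    wMat f g * wMat f' g' = wMat (fun τ => f (τ * g'⁻¹) * f' τ) (g * g') := by
  ext σ τ
  simp only [wMat, Matrix.mul_apply, mul_inv_rev]
  rw [Finset.sum_eq_single (τ * g'⁻¹)]
  · simp [mul_assoc]
  · intro b _ hb
    simp [hb]
  · simp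

lemma fw_mul {R : Type*} [CommRing R] {n : ℕ} (q : Fin n → Fin n → R) (g t τ : Perm (Fin n))
    (h : ∀ a b, a < b → t b < t a → g (t b) < g (t a)) :
    fw q (g * t) τ = fw q g (τ * t⁻¹) * fw q t τ := by
  have h1 : fw q g (τ * t⁻¹) =
      ∏ p ∈ (univ : Finset (Fin n × Fin n)).filter
        (fun p => t p.1 < t p.2 ∧ g (t p.2) < g (t p.1)), q (τ p.2) (τ p.1) := by
    unfold fw invSet
    refine Finset.prod_bij' (fun p _ => (t⁻¹ p.1, t⁻¹ p.2)) (fun p _ => (t p.1, t p.2)) ?_ ?_ ?_ ?_ ?_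
    all_goals simp
  rw [h1]
  unfold fw invSet
  rw [← Finset.prod_union]
  · refine Finset.prod_congr ?_ (fun _ _ => rfl)
    ext ⟨a, b⟩
    rw [mem_union, mem_filter, mem_filter, mem_filter]
    simp only [mem_univ, true_and, Perm.mul_apply]
    have h1 := h a b
    have h2 := h b a
    have h3 : t a = t b ↔ a = b := t.injective.eq_iff
    constructor
    · rintro ⟨h4, h5⟩
      rcases lt_trichotomy (t a) (t b) with h6 | h6 | h6
      · exact Or.inl ⟨h6, h5⟩
      · exact absurd (h3.1 h6) h4.ne
      · exact Or.inr ⟨h4, h6⟩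
    · rintro (⟨h4, h5⟩ | ⟨h4, h5⟩)
      · refine ⟨?_, h5⟩
        rcases lt_trichotomy a b with h6 | h6 | h6
        · exact h6
        · exact absurd (h3.2 h6) h4.ne
        · exact absurd (h2 h6 h4) h5.asymm
      · exact ⟨h4, h1 h4 h5⟩
  · rw [Finset.disjoint_filter]
    rintro p _ ⟨h1, _⟩ ⟨_, h2⟩
    exact h1.asymm h2

lemma fw_tc {R : Type*} [CommRing R] {n : ℕ} (q : Fin n → Fin n → R) (p k : Fin n) (hpk : p ≤ k)
    (τ : Perm (Fin n)) : fw q (tc p k) τ = ∏ j ∈ Ioc p k, q (τ j) (τ p) := by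
  unfold fw
  have : invSet (tc p k) = (Ioc p k).image (fun j => (p, j)) := by
    ext ⟨a, b⟩
    simp only [invSet, mem_filter, mem_univ, true_and, mem_image, mem_Ioc, Prod.mk.injEq,
      Fin.lt_def, Fin.le_def, tc_val] at *
    constructor
    · intro h
      refine ⟨b, ?_, ?_, rfl⟩
      · split_ifs at h <;> omega
      · apply Fin.ext
        split_ifs at h <;> omega
    · rintro ⟨j, h1, rfl, rfl⟩
      split_ifs <;> omega
  rw [this, Finset.prod_image]
  intro x _ y _ h
  exact (Prod.mk.inj h).2

/-- cyclic determinant -/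
lemma det_one_sub_cyclic {R X : Type*} [CommRing R] [Fintype X] [DecidableEq X]
    (π : Perm X) (hπ : ∀ x y, ∃ i : ℕ, (π ^ i) x = y) [Nonempty X] (f : X → R) :
    (1 - Matrix.of (fun x y => if x = π y then f y else 0)).det = 1 - ∏ x, f x := by
  classical
  rcases subsingleton_or_nontrivial X with hs | hs
  · have x : X := Classical.arbitrary X
    have : Unique X := ⟨⟨x⟩, fun y => Subsingleton.elim _ _⟩
    rw [Matrix.det_unique]
    simp only [Matrix.sub_apply, Matrix.one_apply_eq, Matrix.of_apply, Fintype.prod_unique]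
    rw [if_pos (Subsingleton.elim _ _)]
  · have hne : ∀ x, π x ≠ x := by
      intro x hx
      obtain ⟨y, hy⟩ := exists_ne x
      obtain ⟨i, hi⟩ := hπ x y
      apply hy
      rw [← hi]
      exact Perm.pow_apply_eq_self_of_apply_eq_self hx i
    have h1π : (1 : Perm X) ≠ π := by
      intro h
      apply hne (Classical.arbitrary X)
      rw [← h]; rfl
    rw [Matrix.det_apply']
    rw [Finset.sum_eq_add_of_mem (1 : Perm X) π (mem_univ _) (mem_univ _) h1π]
    · have hc : π.IsCycle := by
        refine ⟨Classical.arbitrary X, hne _, fun y _ => ?_⟩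
        obtain ⟨i, hi⟩ := hπ (Classical.arbitrary X) y
        exact ⟨i, by simpa using hi⟩
      have hsupp : π.support = univ := by
        ext x; simp [hne x]
      have hs : (Perm.sign π : ℤ) = -(-1) ^ Fintype.card X := by
        rw [hc.sign, hsupp]; simp
      rw [hs]
      have e1 : ∀ x, (if x = π x then f x else 0) = 0 := fun x => if_neg (hne x).symm
      simp only [Matrix.sub_apply, Matrix.of_apply, Perm.coe_one, id, Matrix.one_apply_eq, e1,
        if_true, Matrix.one_apply_ne (hne _), zero_sub, sub_zero, Finset.prod_neg, Finset.card_univ]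
      simp only [Perm.sign_one, Units.val_one, Int.cast_one, prod_const_one, Int.cast_neg,
        Int.cast_pow, mul_one]
      have : ((-1 : R) ^ Fintype.card X) * ((-1 : R) ^ Fintype.card X) = 1 := by
        rw [← mul_pow]; simp
      linear_combination (- ∏ x, f x) * this
    · rintro σ _ ⟨h1, h2⟩
      by_contra hcon
      have hz : ∀ x, σ x = x ∨ σ x = π x := by
        intro x
        by_contra! hx
        apply hcon
        rw [Finset.prod_eq_zero (mem_univ x), mul_zero]
        simp [hx.1, hx.2]
      apply h2
      obtain ⟨x, hx⟩ : ∃ x, σ x ≠ x := by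
        by_contra! h; exact h1 (Perm.ext h)
      have key : ∀ i : ℕ, σ ((π ^ i) x) = π ((π ^ i) x) := by
        intro i
        induction i with
        | zero => exact (hz x).resolve_left hx
        | succ i ih =>
          rw [pow_succ', Perm.mul_apply]
          refine (hz _).resolve_left fun h => ?_
          rw [← ih] at h
          have := σ.injective h
          rw [ih] at this
          exact hne _ this
      ext y
      obtain ⟨i, rfl⟩ := hπ x y
      exact key i

lemma cosetRep_bij {G : Type*} [Group G] (H : Subgroup G) :
    Function.Bijective (fun p : (G ⧸ H) × H => Quotient.out p.1 * (p.2 : G)) := by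
  constructor
  · rintro ⟨a, h⟩ ⟨b, k⟩ e
    simp only at e
    have e2 : a = b := by
      have := congrArg (QuotientGroup.mk (s := H)) e
      rw [QuotientGroup.mk_mul_of_mem _ h.2, QuotientGroup.mk_mul_of_mem _ k.2] at this
      simpa using this
    subst e2
    have := mul_left_cancel e
    simp [Subtype.ext this]
  · intro g
    have : (Quotient.out (g : G ⧸ H))⁻¹ * g ∈ H := by
      rw [← QuotientGroup.eq]; simp
    exact ⟨⟨(g : G ⧸ H), ⟨_, this⟩⟩, by simp⟩

lemma det_one_sub_wMat {R : Type*} [CommRing R] {n : ℕ} (f : Perm (Fin n) → R)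
    (g : Perm (Fin n)) [Fintype (Perm (Fin n) ⧸ Subgroup.zpowers g)]
    [Fintype (Subgroup.zpowers g)] :
    (1 - wMat f g).det = ∏ Q : Perm (Fin n) ⧸ Subgroup.zpowers g,
      (1 - ∏ h : Subgroup.zpowers g, f (Quotient.out Q * h)) := by
  classical
  let e := Equiv.ofBijective _ (cosetRep_bij (Subgroup.zpowers g))
  let g₀ : Subgroup.zpowers g := ⟨g, Subgroup.mem_zpowers g⟩
  let e' := (Equiv.prodComm _ _).trans e
  rw [← Matrix.det_submatrix_equiv_self e']
  have : (1 - wMat f g).submatrix e' e' = Matrix.blockDiagonal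
      (fun Q : Perm (Fin n) ⧸ Subgroup.zpowers g =>
        (1 - Matrix.of (fun x y : Subgroup.zpowers g =>
          if x = Equiv.mulRight g₀⁻¹ y then f (Quotient.out Q * y) else 0))) := by
    ext ⟨h, Q⟩ ⟨h', Q'⟩
    rw [Matrix.blockDiagonal_apply]
    have key : ∀ k : Subgroup.zpowers g, e' (h, Q) = e' (h', Q') * k ↔ (h = h' * k ∧ Q = Q') := by
      intro k
      have : e' (h', Q') * k = e' (h' * k, Q') := by
        simp [e', e, mul_assoc]
      rw [this, e'.injective.eq_iff, Prod.mk.injEq]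
    have k1 := key g₀⁻¹
    simp only [Subgroup.coe_inv, g₀] at k1
    simp only [Matrix.submatrix_apply, Matrix.sub_apply, Matrix.one_apply, wMat, k1,
      e'.injective.eq_iff, Prod.mk.injEq, Matrix.of_apply, Equiv.coe_mulRight]
    by_cases hQ : Q = Q'
    · subst hQ
      simp only [e', e, g₀, and_true, if_true]
      congr
    · simp [hQ]
  rw [this, Matrix.det_blockDiagonal]
  refine Finset.prod_congr rfl fun Q _ => ?_
  refine det_one_sub_cyclic _ ?_ _
  intro x y
  obtain ⟨i, hi⟩ := Subgroup.mem_zpowers_iff.1 (x⁻¹ * y)⁻¹.2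
  have : x⁻¹ * y ∈ Submonoid.powers (g₀⁻¹) := by
    rw [mem_powers_iff_mem_zpowers]
    refine Subgroup.mem_zpowers_iff.2 ⟨i, ?_⟩
    rw [inv_zpow, inv_eq_iff_eq_inv]
    exact Subtype.ext (by simpa [g₀] using hi)
  obtain ⟨j, hj⟩ := this
  refine ⟨j, ?_⟩
  have : ∀ j : ℕ, ((Equiv.mulRight g₀⁻¹) ^ j) x = x * g₀⁻¹ ^ j := by
    intro j
    induction j with
    | zero => simp
    | succ j ih => rw [pow_succ', Perm.mul_apply, ih, pow_succ, ← mul_assoc]; rfl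
  rw [this]
  simp only at hj
  rw [hj]; simp

lemma exists_perm_map {n : ℕ} (S T : Finset (Fin n)) (h : S.card = T.card) :
    ∃ π : Perm (Fin n), S.image π = T := by
  classical
  let e : {x // x ∈ S} ≃ {x // x ∈ T} := Finset.equivOfCardEq h
  refine ⟨e.extendSubtype, ?_⟩
  apply Finset.eq_of_subset_of_card_le
  · intro y hy
    obtain ⟨x, hx, rfl⟩ := mem_image.1 hy
    exact e.extendSubtype_mem x hx
  · rw [Finset.card_image_of_injective _ (Equiv.injective _), h]

lemma card_image_eq {n : ℕ} (S T : Finset (Fin n)) (h : S.card = T.card) :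
    ((univ : Finset (Perm (Fin n))).filter (fun τ : Perm (Fin n) => S.image τ = T)).card =
      S.card.factorial * (n - S.card).factorial := by
  classical
  have key : ∀ T' ∈ powersetCard S.card (univ : Finset (Fin n)),
      ((univ : Finset (Perm (Fin n))).filter (fun τ : Perm (Fin n) => S.image τ = T')).card =
      ((univ : Finset (Perm (Fin n))).filter (fun τ : Perm (Fin n) => S.image τ = T)).card := by
    intro T' hT'
    obtain ⟨π, hπ⟩ := exists_perm_map T' T (by rw [(mem_powersetCard.1 hT').2, h])
    refine Finset.card_bij' (fun τ _ => π * τ) (fun τ _ => π⁻¹ * τ) ?_ ?_ ?_ ?_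
    · intro τ hτ
      simp only [mem_filter, mem_univ, true_and] at hτ ⊢
      rw [Perm.coe_mul, ← Finset.image_image, hτ, hπ]
    · intro τ hτ
      simp only [mem_filter, mem_univ, true_and] at hτ ⊢
      rw [Perm.coe_mul, ← Finset.image_image, hτ, ← hπ, Finset.image_image, ← Perm.coe_mul]
      simp
    · intro τ _; simp
    · intro τ _; simp
  have h2 := Finset.card_eq_sum_card_fiberwise (f := fun τ : Perm (Fin n) => S.image τ)
    (s := univ) (t := powersetCard S.card univ) (by
      intro τ _
      simp [mem_powersetCard, Finset.card_image_of_injective _ τ.injective])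
  rw [Finset.sum_congr rfl key, Finset.sum_const, Finset.card_powersetCard, Finset.card_univ,
    Finset.card_univ, Fintype.card_perm, Fintype.card_fin, smul_eq_mul] at h2
  have hle : S.card ≤ n := by simpa using S.card_le_univ
  have h3 := Nat.choose_mul_factorial_mul_factorial hle
  rw [h2, mul_assoc] at h3
  exact (Nat.eq_of_mul_eq_mul_left (Nat.choose_pos hle) h3).symm

lemma det_one_sub_eq {R : Type*} [CommRing R] {n : ℕ} (q : Fin n → Fin n → R)
    (f : Perm (Fin n) → R) (g : Perm (Fin n)) [Fintype (Subgroup.zpowers g)]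
    (S : Finset (Fin n)) (hS : ∀ h ∈ Subgroup.zpowers g, S.image h = S)
    (hF : ∀ τ, ∏ h : Subgroup.zpowers g, f (τ * h) = sgT q (S.image τ)) (N : ℕ)
    (hN : N * Fintype.card (Subgroup.zpowers g) = S.card.factorial * (n - S.card).factorial) :
    (1 - wMat f g).det =
      (∏ T ∈ powersetCard S.card (univ : Finset (Fin n)), (1 - sgT q T)) ^ N := by
  classical
  have : Fintype (Perm (Fin n) ⧸ Subgroup.zpowers g) := Fintype.ofFinite _
  rw [det_one_sub_wMat]
  simp only [hF]
  rw [← Finset.prod_fiberwise_of_maps_to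
    (g := fun Q : Perm (Fin n) ⧸ Subgroup.zpowers g => S.image (Quotient.out Q : Perm (Fin n)))
    (t := powersetCard S.card univ)]
  · rw [← Finset.prod_pow]
    refine Finset.prod_congr rfl fun T hT => ?_
    rw [Finset.prod_congr rfl (g := fun _ => 1 - sgT q T), Finset.prod_const]
    · congr 1
      have hpos : 0 < Fintype.card (Subgroup.zpowers g) := Fintype.card_pos
      apply Nat.eq_of_mul_eq_mul_right hpos
      rw [hN, ← card_image_eq S T (mem_powersetCard.1 hT).2.symm, ← Finset.card_univ,
        ← Finset.card_product]
      refine Finset.card_bij (fun p _ => Quotient.out p.1 * (p.2 : Perm (Fin n))) ?_ ?_ ?_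
      · rintro ⟨Q, h⟩ hp
        simp only [mem_product, mem_filter, mem_univ, true_and, and_true] at hp ⊢
        rw [Perm.coe_mul, ← Finset.image_image, hS _ h.2, hp]
      · intro a _ b _ hab
        exact (cosetRep_bij _).1 hab
      · intro τ hτ
        obtain ⟨⟨Q, h⟩, rfl⟩ := (cosetRep_bij (Subgroup.zpowers g)).2 τ
        refine ⟨(Q, h), ?_, rfl⟩
        simp only [mem_product, mem_filter, mem_univ, true_and, and_true] at hτ ⊢
        rwa [Perm.coe_mul, ← Finset.image_image, hS _ h.2] at hτ
    · intro Q hQ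
      rw [(mem_filter.1 hQ).2]
  · intro Q _
    simp [mem_powersetCard, Finset.card_image_of_injective _ (Equiv.injective _)]

lemma tc_zpow_fix {n : ℕ} (a b : Fin n) (h : Perm (Fin n)) (hh : h ∈ Subgroup.zpowers (tc a b))
    (x : Fin n) (hx : x ∉ Icc a b) : h x = x := by
  obtain ⟨i, rfl⟩ := Subgroup.mem_zpowers_iff.1 hh
  apply Perm.zpow_apply_eq_self_of_apply_eq_self
  apply Fin.ext
  rw [tc_val, if_neg]
  simpa [mem_Icc] using hx

lemma tc_zpow_mem {n : ℕ} (a b : Fin n) (h : Perm (Fin n)) (hh : h ∈ Subgroup.zpowers (tc a b))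
    (x : Fin n) : h x ∈ Icc a b ↔ x ∈ Icc a b := by
  constructor
  · intro h1
    by_contra h2
    rw [tc_zpow_fix a b h hh x h2] at h1
    exact h2 h1
  · intro h1
    by_contra h2
    have := h.injective (tc_zpow_fix a b h hh _ h2)
    rw [this] at h2
    exact h2 h1

lemma image_eq_of_mem_iff {n : ℕ} (h : Perm (Fin n)) (S : Finset (Fin n))
    (hS : ∀ x ∈ S, h x ∈ S) : S.image h = S := by
  apply Finset.eq_of_subset_of_card_le
  · intro y hy
    obtain ⟨x, hx, rfl⟩ := mem_image.1 hy
    exact hS x hx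
  · rw [Finset.card_image_of_injective _ (Equiv.injective _)]

lemma tc_zpow_image {n : ℕ} (a b k : Fin n) (hbk : b ≤ k) (h : Perm (Fin n))
    (hh : h ∈ Subgroup.zpowers (tc a b)) : (Icc a k).image h = Icc a k := by
  apply image_eq_of_mem_iff
  intro x hx
  by_cases hx' : x ∈ Icc a b
  · have := (tc_zpow_mem a b h hh x).2 hx'
    rw [mem_Icc] at *
    exact ⟨this.1, this.2.trans hbk⟩
  · rwa [tc_zpow_fix a b h hh x hx']

lemma tc_orbit_surj {n : ℕ} (a b : Fin n) (i : ℕ) (hi : (a : ℕ) + i ≤ b) :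
    ∃ h ∈ Subgroup.zpowers (tc a b), ((h a : Fin n) : ℕ) = a + i := by
  induction i with
  | zero => exact ⟨1, one_mem _, by simp⟩
  | succ i ih =>
    obtain ⟨h, hh, e⟩ := ih (by omega)
    refine ⟨(tc a b)⁻¹ * h, mul_mem (inv_mem (Subgroup.mem_zpowers _)) hh, ?_⟩
    rw [Perm.mul_apply, tc_inv_val, e, if_pos (by omega), if_neg (by omega)]
    omega

lemma tc_orbit_inj {n : ℕ} (a b : Fin n) (h h' : Perm (Fin n))
    (hh : h ∈ Subgroup.zpowers (tc a b)) (hh' : h' ∈ Subgroup.zpowers (tc a b))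
    (e : h a = h' a) : h = h' := by
  ext1 x
  by_cases hx : x ∈ Icc a b
  · rw [mem_Icc, Fin.le_def, Fin.le_def] at hx
    obtain ⟨u, hu, e'⟩ := tc_orbit_surj a b (x - a) (by omega)
    have : u a = x := Fin.ext (by omega)
    rw [← this]
    obtain ⟨i, rfl⟩ := Subgroup.mem_zpowers_iff.1 hu
    obtain ⟨j, rfl⟩ := Subgroup.mem_zpowers_iff.1 hh
    obtain ⟨l, rfl⟩ := Subgroup.mem_zpowers_iff.1 hh'
    rw [← Perm.mul_apply, ← Perm.mul_apply, (Commute.zpow_zpow_self _ j i).eq,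
      (Commute.zpow_zpow_self _ l i).eq, Perm.mul_apply, Perm.mul_apply, e]
  · rw [tc_zpow_fix a b h hh x hx, tc_zpow_fix a b h' hh' x hx]

lemma tc_orbit_prod {R : Type*} [CommMonoid R] {n : ℕ} (a b : Fin n) (hab : a ≤ b)
    [Fintype (Subgroup.zpowers (tc a b))] (F : Fin n → R) :
    ∏ h : Subgroup.zpowers (tc a b), F ((h : Perm (Fin n)) a) = ∏ x ∈ Icc a b, F x := by
  refine Finset.prod_bij (fun h _ => (h : Perm (Fin n)) a) ?_ ?_ ?_ ?_
  · intro h _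
    exact (tc_zpow_mem a b h h.2 a).2 (by simp [hab])
  · intro h _ h' _ e
    exact Subtype.ext (tc_orbit_inj a b h h' h.2 h'.2 e)
  · intro x hx
    rw [mem_Icc, Fin.le_def, Fin.le_def] at hx
    obtain ⟨u, hu, e'⟩ := tc_orbit_surj a b (x - a) (by omega)
    exact ⟨⟨u, hu⟩, mem_univ _, Fin.ext (by simp only; omega)⟩
  · intro _ _; rfl

lemma tc_orbit_card {n : ℕ} (a b : Fin n) (hab : a ≤ b)
    [Fintype (Subgroup.zpowers (tc a b))] :
    Fintype.card (Subgroup.zpowers (tc a b)) = (b : ℕ) + 1 - a := by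
  have := tc_orbit_prod (R := Multiplicative ℕ) a b hab (fun _ => Multiplicative.ofAdd 1)
  simp only [Finset.prod_const] at this
  have h2 := congrArg Multiplicative.toAdd this
  simpa using h2

lemma sgT_image {R : Type*} [CommRing R] {n : ℕ} (q : Fin n → Fin n → R) (S : Finset (Fin n))
    (τ : Perm (Fin n)) :
    sgT q (S.image τ) = ∏ x ∈ S, ∏ y ∈ S.erase x, q (τ y) (τ x) := by
  rw [Finset.prod_sigma']
  unfold sgT
  refine Finset.prod_bij' (fun p _ => ⟨τ⁻¹ p.2, τ⁻¹ p.1⟩) (fun p _ => (τ p.2, τ p.1)) ?_ ?_ ?_ ?_ ?_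
  · rintro ⟨x, y⟩ h
    simp only [mem_filter, mem_product, mem_image, mem_sigma, mem_erase] at h ⊢
    obtain ⟨⟨⟨x, hx, rfl⟩, ⟨y, hy, rfl⟩⟩, hne⟩ := h
    simp only [Perm.inv_def, Equiv.symm_apply_apply]
    exact ⟨hy, fun e => hne (by rw [e]), hx⟩
  · rintro ⟨x, y⟩ h
    simp only [mem_filter, mem_product, mem_image, mem_sigma, mem_erase] at h ⊢
    exact ⟨⟨⟨y, h.2.2, rfl⟩, ⟨x, h.1, rfl⟩⟩, fun e => h.2.1 (τ.injective e)⟩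
  · rintro ⟨x, y⟩ h; simp
  · rintro ⟨x, y⟩ h; simp
  · rintro ⟨x, y⟩ h; simp

lemma prod_Ioc_zpow {R : Type*} [CommRing R] {n : ℕ} (q : Fin n → Fin n → R) (a b : Fin n)
    (τ h : Perm (Fin n)) (hh : h ∈ Subgroup.zpowers (tc a b)) :
    ∏ j ∈ Ioc a b, q ((τ * h) j) ((τ * h) a) =
      ∏ y ∈ (Icc a b).erase (h a), q (τ y) (τ (h a)) := by
  refine Finset.prod_equiv h ?_ ?_
  · intro i
    rw [mem_erase, tc_zpow_mem a b h hh, h.injective.ne_iff, mem_Ioc, mem_Icc]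
    constructor
    · rintro ⟨h1, h2⟩; exact ⟨h1.ne', h1.le, h2⟩
    · rintro ⟨h1, h2, h3⟩; exact ⟨lt_of_le_of_ne h2 h1.symm, h3⟩
  · intro i _; rfl

/-- the modified weight -/
def fw2 {R : Type*} [CommRing R] {n : ℕ} (q : Fin n → Fin n → R) (a k : Fin n)
    (τ : Perm (Fin n)) : R := q (τ a) (τ k) * ∏ j ∈ Ioc a k, q (τ j) (τ a)

/-- product of all factors of size m -/
def EE {R : Type*} [CommRing R] {n : ℕ} (q : Fin n → Fin n → R) (m : ℕ) : R :=
  ∏ T ∈ powersetCard m (univ : Finset (Fin n)), (1 - sgT q T)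

lemma det_C {R : Type*} [CommRing R] {n : ℕ} (q : Fin n → Fin n → R) (a k : Fin n) (hak : a ≤ k)
    (m : ℕ) (hm : (k : ℕ) + 1 - a = m) :
    (1 - wMat (fw q (tc a k)) (tc a k)).det =
      EE q m ^ ((m - 1).factorial * (n - m).factorial) := by
  classical
  have : Fintype (Subgroup.zpowers (tc a k)) := Fintype.ofFinite _
  have hc : (Icc a k).card = m := by simpa using hm
  rw [det_one_sub_eq q _ _ (Icc a k) (tc_zpow_image a k k le_rfl) ?_
    ((m - 1).factorial * (n - m).factorial) ?_, hc]
  · rfl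
  · intro τ
    simp only [fw_tc q a k hak]
    rw [sgT_image, ← tc_orbit_prod a k hak]
    refine Finset.prod_congr rfl fun h _ => ?_
    exact prod_Ioc_zpow q a k τ h h.2
  · rw [tc_orbit_card a k hak, hc, hm]
    have : 0 < m := by
      rw [Fin.le_def] at hak; omega
    rw [← Nat.mul_factorial_pred this.ne']
    ring

lemma det_C2 {R : Type*} [CommRing R] {n : ℕ} (q : Fin n → Fin n → R) (a b k : Fin n) (hak : a ≤ b)
    (hbk : (b : ℕ) + 1 = k) (m : ℕ) (hm : (k : ℕ) + 1 - a = m) :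
    (1 - wMat (fw2 q a k) (tc a b)).det =
      EE q m ^ (m * (m - 2).factorial * (n - m).factorial) := by
  classical
  have : Fintype (Subgroup.zpowers (tc a b)) := Fintype.ofFinite _
  have hc : (Icc a k).card = m := by simpa using hm
  have hbk' : b ≤ k := by rw [Fin.le_def]; omega
  have hk : k ∉ Icc a b := by simp only [mem_Icc, Fin.le_def]; omega
  have hI : Icc a k = insert k (Icc a b) := by
    ext x; simp only [mem_Icc, mem_insert, Fin.le_def, Fin.ext_iff] at *; omega
  have hI' : Ioc a k = insert k (Ioc a b) := by
    ext x; simp only [mem_Ioc, mem_insert, Fin.le_def, Fin.lt_def, Fin.ext_iff] at *; omega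
  have hk' : k ∉ Ioc a b := fun h => hk (Ioc_subset_Icc_self h)
  rw [det_one_sub_eq q _ _ (Icc a k) (tc_zpow_image a b k hbk') ?_
    (m * (m - 2).factorial * (n - m).factorial) ?_, hc]
  · rfl
  · intro τ
    rw [sgT_image, hI, Finset.prod_insert hk, Finset.erase_insert hk, ← Finset.prod_mul_distrib,
      ← tc_orbit_prod a b hak]
    refine Finset.prod_congr rfl fun h _ => ?_
    have hmem : (h : Perm (Fin n)) a ∈ Icc a b := (tc_zpow_mem a b h h.2 a).2 (by simp [hak])
    have hne : k ≠ (h : Perm (Fin n)) a := fun e => hk (by rw [e]; exact hmem)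
    rw [fw2, hI', Finset.prod_insert hk', prod_Ioc_zpow q a b τ h h.2,
      Finset.erase_insert_of_ne hne, Finset.prod_insert (fun e => hk (mem_of_mem_erase e)),
      Perm.mul_apply, Perm.mul_apply, tc_zpow_fix a b h h.2 k hk]
  · rw [tc_orbit_card a b hak, hc]
    rw [Fin.le_def] at hak
    obtain ⟨l, rfl⟩ : ∃ l, m = l + 2 := ⟨m - 2, by omega⟩
    have : (b : ℕ) + 1 - a = l + 1 := by omega
    rw [this, Nat.factorial_succ (l + 1), Nat.factorial_succ l]
    simp only [Nat.add_sub_cancel]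
    ring

lemma tc_rel {n : ℕ} (a b p k : Fin n) (hbk : (b : ℕ) + 1 = k) (hap : a < p) (hpk : p ≤ k) :
    tc (tc a k p) k * tc a k = tc a b * tc p k := by
  rw [Fin.lt_def] at hap
  rw [Fin.le_def] at hpk
  have h0 : ((tc a k p : Fin n) : ℕ) = p - 1 := by
    rw [tc_val, if_pos (by omega), if_neg (by omega)]
  ext x
  simp only [Perm.mul_apply, tc_val, h0]
  split_ifs <;> omega

lemma tc_self {n : ℕ} (k : Fin n) : tc k k = 1 := by
  ext x
  rw [tc_val]
  simp only [Perm.coe_one, id]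
  split_ifs <;> omega

lemma wt_rel {R : Type*} [CommRing R] {n : ℕ} (q : Fin n → Fin n → R) (a p k : Fin n)
    (hap : a < p) (hpk : p ≤ k) (τ : Perm (Fin n)) :
    fw q (tc (tc a k p) k) (τ * (tc a k)⁻¹) * fw q (tc a k) τ =
      fw2 q a k (τ * (tc p k)⁻¹) * fw q (tc p k) τ := by
  have hap' := hap
  have hpk' := hpk
  rw [Fin.lt_def] at hap'
  rw [Fin.le_def] at hpk'
  have h0 : ((tc a k p : Fin n) : ℕ) = p - 1 := by
    rw [tc_val, if_pos (by omega), if_neg (by omega)]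
  have h0k : tc a k p ≤ k := by rw [Fin.le_def, h0]; omega
  rw [fw_tc q _ k h0k, fw_tc q a k (hap.le.trans hpk), fw_tc q p k hpk]
  have e1 : ∏ j ∈ Ioc (tc a k p) k, q ((τ * (tc a k)⁻¹) j) ((τ * (tc a k)⁻¹) (tc a k p)) =
      ∏ j ∈ insert a (Ioc p k), q (τ j) (τ p) := by
    refine (Finset.prod_equiv (tc a k) ?_ ?_).symm
    · intro i
      simp only [mem_insert, mem_Ioc, Fin.lt_def, Fin.le_def, Fin.ext_iff, h0, tc_val]
      split_ifs <;> omega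
    · intro i _
      simp
  have e2 : ∏ j ∈ Ioc a k, q ((τ * (tc p k)⁻¹) j) (τ a) = ∏ j ∈ Ioc a k, q (τ j) (τ a) := by
    refine (Finset.prod_equiv (tc p k) ?_ ?_).symm
    · intro i
      simp only [mem_Ioc, Fin.lt_def, Fin.le_def, tc_val]
      split_ifs <;> omega
    · intro i _
      simp
  have e3 : (τ * (tc p k)⁻¹) a = τ a := by
    rw [Perm.mul_apply]
    congr 1
    apply Fin.ext
    rw [tc_inv_val, if_neg (by omega)]
  have e4 : (τ * (tc p k)⁻¹) k = τ p := by
    rw [Perm.mul_apply]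
    congr 1
    apply Fin.ext
    rw [tc_inv_val, if_pos (by omega), if_pos rfl]
  rw [e1, fw2, e3, e4, e2, Finset.prod_insert (by simp [hap.le])]
  ring

/-- the elements β -/
def BB {R : Type*} [CommRing R] {n : ℕ} (q : Fin n → Fin n → R) (a k : Fin n) :
    Matrix (Perm (Fin n)) (Perm (Fin n)) R :=
  ∑ p ∈ Icc a k, wMat (fw q (tc p k)) (tc p k)

lemma wMat_one {R : Type*} [CommRing R] {n : ℕ} (q : Fin n → Fin n → R) :
    wMat (fw q 1) 1 = 1 := by
  ext σ τ
  have : invSet (1 : Perm (Fin n)) = ∅ := by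
    ext ⟨x, y⟩
    rw [invSet, mem_filter]
    simp only [Perm.coe_one, id, notMem_empty, iff_false]
    rintro ⟨_, h1, h2⟩
    exact h1.asymm h2
  simp [wMat, fw, this, Matrix.one_apply]

lemma BB_rel {R : Type*} [CommRing R] {n : ℕ} (q : Fin n → Fin n → R) (a a1 b k : Fin n)
    (ha1 : (a : ℕ) + 1 = a1) (hbk : (b : ℕ) + 1 = k) (hak : a < k) :
    BB q a k * (1 - wMat (fw q (tc a k)) (tc a k)) = (1 - wMat (fw2 q a k) (tc a b)) * BB q a1 k := by
  have hak' := hak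
  rw [Fin.lt_def] at hak'
  have hI : Icc a1 k = Ioc a k := by
    ext x; simp only [mem_Icc, mem_Ioc, Fin.lt_def, Fin.le_def]; omega
  have hI2 : Icc a k = insert a (Ioc a k) := by
    ext x; simp only [mem_Icc, mem_Ioc, mem_insert, Fin.ext_iff, Fin.lt_def, Fin.le_def]; omega
  have hta : tc a k a = k := by
    apply Fin.ext; rw [tc_val, if_pos (by omega), if_pos rfl]
  have e1 : BB q a k = wMat (fw q (tc a k)) (tc a k) + BB q a1 k := by
    rw [BB, BB, hI, hI2, Finset.sum_insert (by simp)]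
  have e2 : BB q a k = 1 + ∑ p ∈ Ioc a k, wMat (fw q (tc (tc a k p) k)) (tc (tc a k p) k) := by
    have : BB q a k = ∑ p ∈ Icc a k, wMat (fw q (tc (tc a k p) k)) (tc (tc a k p) k) := by
      rw [BB]
      refine (Finset.sum_equiv (tc a k) ?_ ?_).symm
      · intro i
        simp only [mem_Icc, Fin.le_def, tc_val]
        split_ifs <;> omega
      · intro i _; rfl
    rw [this, hI2, Finset.sum_insert (by simp), hta, tc_self, wMat_one]
  have e3 : BB q a k * wMat (fw q (tc a k)) (tc a k) =
      wMat (fw q (tc a k)) (tc a k) + wMat (fw2 q a k) (tc a b) * BB q a1 k := by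
    rw [e2, add_mul, one_mul, Finset.sum_mul, BB, hI, Finset.mul_sum]
    congr 1
    refine Finset.sum_congr rfl fun p hp => ?_
    rw [mem_Ioc] at hp
    rw [wMat_mul, wMat_mul, tc_rel a b p k hbk hp.1 hp.2]
    congr 1
    ext τ
    exact wt_rel q a p k hp.1 hp.2 τ
  rw [mul_sub, mul_one, e3, sub_mul, one_mul, e1]
  abel

lemma det_BB {R : Type*} [CommRing R] [IsDomain R] {n : ℕ} (q : Fin n → Fin n → R)
    (hE : ∀ m, 2 ≤ m → EE q m ≠ 0) (k : Fin n) (d : ℕ) : ∀ a : Fin n, (a : ℕ) + d = k →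
    (BB q a k).det = ∏ m ∈ Icc 2 (d + 1), EE q m ^ ((m - 2).factorial * (n - m).factorial) := by
  induction d with
  | zero =>
    intro a ha
    have : a = k := Fin.ext (by omega)
    subst this
    simp [BB, tc_self, wMat_one]
  | succ d ih =>
    intro a ha
    have hkn := k.2
    let a1 : Fin n := ⟨a + 1, by omega⟩
    let b : Fin n := ⟨k - 1, by omega⟩
    have h := congrArg Matrix.det (BB_rel q a a1 b k rfl (by simp only [b]; omega)
      (by rw [Fin.lt_def]; omega))
    rw [Matrix.det_mul, Matrix.det_mul, ih a1 (by simp only [a1]; omega),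
      det_C q a k (by rw [Fin.le_def]; omega) (d + 2) (by omega),
      det_C2 q a b k (by rw [Fin.le_def]; simp only [b]; omega) (by simp only [b]; omega) (d + 2)
        (by omega)] at h
    have hne : EE q (d + 2) ^ ((d + 2 - 1).factorial * (n - (d + 2)).factorial) ≠ 0 :=
      pow_ne_zero _ (hE _ (by omega))
    apply mul_right_cancel₀ hne
    rw [h, Finset.prod_Icc_succ_top (b := d + 1) (by omega), mul_comm,
      mul_assoc (∏ m ∈ Icc 2 (d + 1), _), ← pow_add]
    congr 2
    simp only [Nat.add_sub_cancel]
    have : d + 2 - 1 = d + 1 := by omega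
    have h' : d + 1 + 1 - 2 = d := by omega
    rw [this, h', Nat.factorial_succ]
    ring

/-- partial sums -/
def AA {R : Type*} [CommRing R] {n : ℕ} (q : Fin n → Fin n → R) (k : ℕ) :
    Matrix (Perm (Fin n)) (Perm (Fin n)) R :=
  ∑ g ∈ (univ : Finset (Perm (Fin n))).filter (fun g => ∀ x : Fin n, k ≤ x → g x = x),
    wMat (fw q g) g

lemma AA_succ {R : Type*} [CommRing R] {n : ℕ} (q : Fin n → Fin n → R) (z k : Fin n)
    (hz : (z : ℕ) = 0) : AA q (k + 1) = AA q k * BB q z k := by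
  rw [AA, AA, BB, Finset.sum_mul_sum, ← Finset.sum_product']
  refine (Finset.sum_bij' (fun p _ => p.1 * tc p.2 k)
    (fun g _ => (g * (tc (g⁻¹ k) k)⁻¹, g⁻¹ k)) ?_ ?_ ?_ ?_ ?_).symm
  · rintro ⟨g, p⟩ h
    simp only [mem_product, mem_filter, mem_univ, true_and, mem_Icc, Fin.le_def] at h ⊢
    intro x hx
    have : tc p k x = x := by apply Fin.ext; rw [tc_val, if_neg (by omega)]
    rw [Perm.mul_apply, this, h.1 x (by omega)]
  · intro g h
    simp only [mem_product, mem_filter, mem_univ, true_and, mem_Icc, Fin.le_def] at h ⊢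
    have hp : ((g⁻¹ k : Fin n) : ℕ) ≤ k := by
      by_contra hc
      have h1 := h (g⁻¹ k) (by omega)
      rw [← Perm.mul_apply, mul_inv_cancel, Perm.one_apply] at h1
      rw [← h1] at hc
      exact hc le_rfl
    refine ⟨?_, by omega, hp⟩
    intro x hx
    rw [Perm.mul_apply]
    by_cases hxk : x = k
    · subst hxk
      have : (tc (g⁻¹ x) x)⁻¹ x = g⁻¹ x := by
        apply Fin.ext; rw [tc_inv_val, if_pos (by omega), if_pos rfl]
      rw [this]; simp
    · have hxk' : (x : ℕ) ≠ k := fun e => hxk (Fin.ext e)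
      have : (tc (g⁻¹ k) k)⁻¹ x = x := by
        apply Fin.ext; rw [tc_inv_val, if_neg (by omega)]
      rw [this, h x (by omega)]
  · rintro ⟨g, p⟩ h
    simp only [mem_product, mem_filter, mem_univ, true_and, mem_Icc, Fin.le_def] at h ⊢
    have hg : g⁻¹ k = k := by
      rw [Perm.inv_eq_iff_eq]; exact (h.1 k le_rfl).symm
    have : (g * tc p k)⁻¹ k = p := by
      rw [mul_inv_rev, Perm.mul_apply, hg]
      apply Fin.ext; rw [tc_inv_val, if_pos (by omega), if_pos rfl]
    rw [this]; simp
  · intro g h; simp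
  · rintro ⟨g, p⟩ h
    simp only [mem_product, mem_filter, mem_univ, true_and, mem_Icc, Fin.le_def] at h ⊢
    rw [wMat_mul]
    congr 1
    ext τ
    refine (fw_mul q g (tc p k) τ ?_).symm
    intro a b hab hlt
    have hgk := h.1 k le_rfl
    have h1 : tc p k a = k ∧ ((tc p k b : Fin n) : ℕ) < k := by
      rw [Fin.lt_def] at hab hlt
      rw [Fin.ext_iff]
      simp only [tc_val] at hlt ⊢
      split_ifs at hlt ⊢ <;> omega
    rw [h1.1, hgk, Fin.lt_def]
    by_contra hc
    have h2 := h.1 (g (tc p k b)) (by omega)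
    have h3 := g.injective h2
    rw [h3] at hc
    omega

lemma det_AA {R : Type*} [CommRing R] [IsDomain R] {n : ℕ} (q : Fin n → Fin n → R)
    (hE : ∀ m, 2 ≤ m → EE q m ≠ 0) (k : ℕ) (hk : k ≤ n) :
    (AA q k).det = ∏ m ∈ Icc 2 k,
      (EE q m ^ ((m - 2).factorial * (n - m).factorial)) ^ (k - m + 1) := by
  induction k with
  | zero =>
    have : ((univ : Finset (Perm (Fin n))).filter (fun g => ∀ x : Fin n, 0 ≤ (x : ℕ) → g x = x))
        = {1} := by
      ext g
      simp [Perm.ext_iff]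
    rw [AA, this]
    simp [wMat_one]
  | succ k ih =>
    let k' : Fin n := ⟨k, by omega⟩
    let z : Fin n := ⟨0, by omega⟩
    have h := AA_succ q z k' rfl
    simp only [k'] at h
    rw [h, Matrix.det_mul, ih (by omega), det_BB q hE _ k z (by simp [z])]
    rcases Nat.eq_zero_or_pos k with rfl | hk0
    · simp
    rw [Finset.prod_Icc_succ_top (by omega), Finset.prod_Icc_succ_top (by omega), ← mul_assoc,
      ← Finset.prod_mul_distrib]
    congr 1
    · refine Finset.prod_congr rfl fun m hm => ?_
      rw [mem_Icc] at hm
      rw [← pow_succ]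
      congr 1
      omega
    · simp

lemma det_sum {R : Type*} [CommRing R] [IsDomain R] {n : ℕ} (q : Fin n → Fin n → R)
    (hE : ∀ m, 2 ≤ m → EE q m ≠ 0) :
    (∑ g : Perm (Fin n), wMat (fw q g) g).det = ∏ m ∈ Icc 2 n,
      ∏ T ∈ powersetCard m (univ : Finset (Fin n)),
        (1 - sgT q T) ^ ((m - 2).factorial * (n - m + 1).factorial) := by
  have h := det_AA q hE n le_rfl
  have : ((univ : Finset (Perm (Fin n))).filter (fun g => ∀ x : Fin n, n ≤ (x : ℕ) → g x = x))
      = univ := by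
    ext g
    simp only [mem_filter, mem_univ, true_and, iff_true]
    intro x hx
    have := x.2
    omega
  rw [AA, this] at h
  rw [h]
  refine Finset.prod_congr rfl fun m _ => ?_
  rw [Finset.prod_pow, ← pow_mul, EE, Nat.factorial_succ]
  congr 1
  ring

lemma map_sgT {R S : Type*} [CommRing R] [CommRing S] {n : ℕ} (φ : R →+* S)
    (q : Fin n → Fin n → R) (T : Finset (Fin n)) :
    φ (sgT q T) = sgT (fun i j => φ (q i j)) T := by
  simp [sgT, map_prod]

open Polynomial in
lemma EE_poly_ne {n : ℕ} (q : Fin n → Fin n → ℂ) (m : ℕ) (hm : 2 ≤ m) :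
    EE (fun i j => (X * C (q i j) : ℂ[X])) m ≠ 0 := by
  rw [EE, Finset.prod_ne_zero_iff]
  intro T hT h0
  have h := congrArg (evalRingHom (0 : ℂ)) h0
  rw [map_sub, map_one, map_zero, map_sgT] at h
  have hT2 : 1 < T.card := by rw [(mem_powersetCard.1 hT).2]; omega
  obtain ⟨x, hx, y, hy, hxy⟩ := Finset.one_lt_card.1 hT2
  have : sgT (fun i j => (evalRingHom (0 : ℂ)) (X * C (q i j))) T = 0 := by
    unfold sgT
    apply Finset.prod_eq_zero (i := (x, y))
    · simp [hx, hy, hxy]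
    · simp
  rw [this] at h
  simp at h

/-- The determinant of `A_Q = ∑_{g ∈ S_n} M_q(g)` factors as
`∏_{m=2}^{n} ∏_T (1 − σ_T)^{(m−2)!·(n−m+1)!}`, the inner product being over all
subsets `T ⊆ Fin n` of cardinality `m`. -/
theorem det_A_factorization (n : ℕ) (hn : 1 ≤ n) (q : Fin n → Fin n → ℂ) :
    (∑ g : Equiv.Perm (Fin n), twistMat n q g).det =
      ∏ m ∈ Finset.Icc 2 n,
        ∏ T ∈ Finset.powersetCard m (Finset.univ : Finset (Fin n)),
          (1 - sigmaT q T) ^ (Nat.factorial (m - 2) * Nat.factorial (n - m + 1)) := by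
  have h := congrArg (Polynomial.evalRingHom (1 : ℂ))
    (det_sum (fun i j => (Polynomial.X * Polynomial.C (q i j))) (EE_poly_ne q))
  rw [RingHom.map_det, map_sum, map_prod] at h
  simp only [map_prod, map_pow, map_sub, map_one, map_sgT] at h
  have e : ∀ i j, (Polynomial.evalRingHom (1 : ℂ)) (Polynomial.X * Polynomial.C (q i j)) = q i j := by
    intro i j; simp
  simp only [e] at h
  refine Eq.trans ?_ h
  congr 1
  refine Finset.sum_congr rfl fun g _ => ?_
  ext σ τ
  simp only [RingHom.mapMatrix_apply, Matrix.map_apply, twistMat, wMat, fw]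
  split_ifs
  · rw [map_prod]
    simp only [e]
  · simp
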